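/- arXiv:1602.02859 — 4 statements merged into one kernel-verified Lean document; each statement's English description precedes it below -/
import Mathlib

section
/- Let n ≥ 1 and s, s₁, s₂ ∈ ℝ with s > 0, s < s₁ and s < s₂. Then there is a constant C such that for every x ∈ ℝⁿ, ( ∫_{ℝⁿ} ( |x|^s / ( |x−y|^{s₁} |y|^{s₂} ) )^{n/(s₁+s₂−s)} dy )^{(s₁+s₂−s)/n} ≤ C. -/
/-!
Put `p = n / (s₁ + s₂ - s)`, `a = s₁ p` and `b = s₂ p`. The hypotheses say exactly that
`0 < a < n`, `0 < b < n` and `a + b = n + s p > n`. The `p`-th power of the integrand is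
`|x|^(a+b-n) |x-y|^(-a) |y|^(-b)`, so the integral is invariant under dilations, and for `x ≠ 0` the
substitution `y = |x| z` reduces it to `∫ |e-z|^(-a) |z|^(-b) dz` with `e = x / |x|` a unit vector
(`lintegral_dilate`). For `x = 0` it vanishes because `s > 0`.

The kernel has three sources of divergence: `z = 0`, where it is comparable to `|z|^(-b)`,
`z = e`, where it is comparable to `|e-z|^(-a)`, and infinity, where it is comparable to
`(1+|z|)^(-(a+b))` (`kernel_le`). Each of these three is integrable on its region, and by translation
invariance the three integrals do not depend on `e` (`exists_kernel_bound`).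
-/

open scoped ENNReal NNReal BigOperators
open MeasureTheory

noncomputable section

/-- `1/q` for `q ∈ [0,∞]`, with the convention `1/∞ = 0`. -/
def iv (q : ℝ≥0∞) : ℝ := q⁻¹.toReal

/-- The dual exponent `q'` of `q ∈ [1,∞]`, defined by `1/q + 1/q' = 1`. -/
def dualExp (q : ℝ≥0∞) : ℝ≥0∞ :=
  if q = ∞ then 1 else if q = 1 then ∞ else ENNReal.ofReal (q.toReal / (q.toReal - 1))

/-- Euclidean norm `|k|` of an integer vector `k ∈ ℤⁿ`. -/
def znorm {n : ℕ} (k : Fin n → ℤ) : ℝ := Real.sqrt (∑ i, ((k i : ℝ)) ^ 2)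

/-- Japanese bracket `⟨k⟩ = (1+|k|²)^{1/2}` of an integer vector. -/
def zbr {n : ℕ} (k : Fin n → ℤ) : ℝ := Real.sqrt (1 + ∑ i, ((k i : ℝ)) ^ 2)

/-- Euclidean norm `|x|` on `ℝⁿ` (realized as `Fin n → ℝ`). -/
def rnorm {n : ℕ} (x : Fin n → ℝ) : ℝ := Real.sqrt (∑ i, (x i) ^ 2)

/-- Japanese bracket `⟨x⟩ = (1+|x|²)^{1/2}` on `ℝⁿ`. -/
def rbr {n : ℕ} (x : Fin n → ℝ) : ℝ := Real.sqrt (1 + ∑ i, (x i) ^ 2)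

/-- The weighted norm `‖a‖_{l(q,s)}` (weight `⟨k⟩^s`) of a nonnegative sequence on `ℤⁿ`,
valued in `ℝ≥0∞`.  For `q = ∞` it is `sup_k a_k ⟨k⟩^s`, otherwise
`(∑_k (a_k ⟨k⟩^s)^q)^{1/q}`. -/
def lns (n : ℕ) (q : ℝ≥0∞) (s : ℝ) (a : (Fin n → ℤ) → ℝ≥0∞) : ℝ≥0∞ :=
  if q = ∞ then ⨆ k, a k * ENNReal.ofReal (zbr k ^ s)
  else (∑' k, (a k * ENNReal.ofReal (zbr k ^ s)) ^ q.toReal) ^ (1 / q.toReal)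

/-- Convolution of (nonnegative) sequences on `ℤⁿ`: `(a∗b)(k) = ∑_j a_{k-j} b_j`. -/
def dconv {n : ℕ} (a b : (Fin n → ℤ) → ℝ≥0∞) : (Fin n → ℤ) → ℝ≥0∞ :=
  fun k => ∑' j, a (k - j) * b j

/-- The weighted norm `‖f‖_{L(q,s)}` (weight `⟨x⟩^s`) of a nonnegative function on `ℝⁿ`.
For `q = ∞` it is `ess sup_x f(x) ⟨x⟩^s`, otherwise `(∫ (f(x) ⟨x⟩^s)^q dx)^{1/q}`. -/
def Lns (n : ℕ) (q : ℝ≥0∞) (s : ℝ) (f : (Fin n → ℝ) → ℝ≥0∞) : ℝ≥0∞ :=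
  if q = ∞ then essSup (fun x => f x * ENNReal.ofReal (rbr x ^ s)) volume
  else (∫⁻ x, (f x * ENNReal.ofReal (rbr x ^ s)) ^ q.toReal) ^ (1 / q.toReal)

/-- The power-weighted norm `‖f‖_{𝕃(q,s)}` (weight `|x|^s`) of a nonnegative function on `ℝⁿ`. -/
def Pns (n : ℕ) (q : ℝ≥0∞) (s : ℝ) (f : (Fin n → ℝ) → ℝ≥0∞) : ℝ≥0∞ :=
  if q = ∞ then essSup (fun x => f x * ENNReal.ofReal (rnorm x ^ s)) volume
  else (∫⁻ x, (f x * ENNReal.ofReal (rnorm x ^ s)) ^ q.toReal) ^ (1 / q.toReal)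

/-- Convolution of (nonnegative) functions on `ℝⁿ`: `(f∗g)(x) = ∫ f(x-y) g(y) dy`. -/
def cconv {n : ℕ} (f g : (Fin n → ℝ) → ℝ≥0∞) : (Fin n → ℝ) → ℝ≥0∞ :=
  fun x => ∫⁻ y, f (x - y) * g y

/-- The discrete fractional integral operator `(𝓘_λ a)(k) = ∑_{j ≠ k} a_j / |k-j|^{n-λ}`. -/
def dRiesz (n : ℕ) (lam : ℝ) (a : (Fin n → ℤ) → ℝ≥0∞) : (Fin n → ℤ) → ℝ≥0∞ :=
  fun k => ∑' j, if j = k then 0 else a j * ENNReal.ofReal (znorm (k - j) ^ (lam - (n : ℝ)))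

/-- The Riesz potential `(I_λ f)(x) = ∫ f(y) / |x-y|^{n-λ} dy`. -/
def cRiesz (n : ℕ) (lam : ℝ) (f : (Fin n → ℝ) → ℝ≥0∞) : (Fin n → ℝ) → ℝ≥0∞ :=
  fun x => ∫⁻ y, f y * ENNReal.ofReal (rnorm (x - y) ^ (lam - (n : ℝ)))

/-- Condition `𝒜₁`. -/
def condA1 (n : ℕ) (q q₁ q₂ : ℝ≥0∞) (s s₁ s₂ : ℝ) : Prop :=
  s ≤ s₁ ∧ s ≤ s₂ ∧ 0 ≤ s₁ + s₂ ∧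
  1 + max (iv q + s / (n : ℝ)) 0 < max (iv q₁ + s₁ / (n : ℝ)) 0 + max (iv q₂ + s₂ / (n : ℝ)) 0 ∧
  iv q + s / (n : ℝ) ≤ iv q₁ + s₁ / (n : ℝ) ∧
  iv q + s / (n : ℝ) ≤ iv q₂ + s₂ / (n : ℝ) ∧
  1 ≤ iv q₁ + s₁ / (n : ℝ) + iv q₂ + s₂ / (n : ℝ) ∧
  (iv q + s / (n : ℝ) = iv q₁ + s₁ / (n : ℝ) → q = q₁ ∧ s = s₁) ∧
  (iv q + s / (n : ℝ) = iv q₂ + s₂ / (n : ℝ) → q = q₂ ∧ s = s₂) ∧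
  (1 = iv q₁ + s₁ / (n : ℝ) + iv q₂ + s₂ / (n : ℝ) → dualExp q₁ = q₂ ∧ -s₁ = s₂)

/-- Condition `𝒜₂`. -/
def condA2 (q q₁ q₂ : ℝ≥0∞) (s s₁ s₂ : ℝ) : Prop :=
  s = 0 ∧ s₁ = 0 ∧ s₂ = 0 ∧
  ((q = q₁ ∧ q₂ = 1) ∨ (q = q₂ ∧ q₁ = 1) ∨ (q = ∞ ∧ iv q₁ + iv q₂ = 1))

/-- Condition `𝒜₃`. -/
def condA3 (n : ℕ) (q q₁ q₂ : ℝ≥0∞) (s s₁ s₂ : ℝ) : Prop :=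
  s ≤ s₁ ∧ s ≤ s₂ ∧ iv q₁ + iv q₂ = 1 ∧ s₁ + s₂ = 0 ∧
  iv q + s / (n : ℝ) < 0 ∧ 0 ≤ iv q₁ + s₁ / (n : ℝ) ∧ 0 ≤ iv q₂ + s₂ / (n : ℝ)

/-- Condition `𝒜₄`. -/
def condA4 (n : ℕ) (q q₁ q₂ : ℝ≥0∞) (s s₁ s₂ : ℝ) : Prop :=
  s ≤ s₁ ∧ s ≤ s₂ ∧ 0 ≤ s₁ + s₂ ∧
  1 + (iv q + s / (n : ℝ)) = iv q₁ + s₁ / (n : ℝ) + iv q₂ + s₂ / (n : ℝ) ∧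
  iv q ≤ iv q₁ + iv q₂ ∧
  iv q + s / (n : ℝ) < iv q₁ + s₁ / (n : ℝ) ∧
  iv q + s / (n : ℝ) < iv q₂ + s₂ / (n : ℝ) ∧
  0 < iv q + s / (n : ℝ) ∧
  ((s = s₁ ∨ s = s₂) → q ≠ ∞ ∧ q₁ ≠ 1 ∧ q₂ ≠ 1)

/-- Condition `𝒞₁`. -/
def condC1 (n : ℕ) (lam : ℝ) (q p : ℝ≥0∞) (s t : ℝ) : Prop :=
  s ≤ t ∧
  lam / (n : ℝ) + max (iv q + s / (n : ℝ)) 0 < max (iv p + t / (n : ℝ)) 0 ∧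
  lam / (n : ℝ) + iv q + s / (n : ℝ) ≤ 1 ∧
  (lam / (n : ℝ) + iv q + s / (n : ℝ) = 1 → q = ∞ ∧ s = (n : ℝ) - lam)

/-- Condition `𝒞₃`. -/
def condC3 (n : ℕ) (lam : ℝ) (q p : ℝ≥0∞) (s t : ℝ) : Prop :=
  s ≤ t ∧ p = 1 ∧ t = lam - (n : ℝ) ∧ iv q + s / (n : ℝ) < 0

/-- Condition `𝒞₄`. -/
def condC4 (n : ℕ) (lam : ℝ) (q p : ℝ≥0∞) (s t : ℝ) : Prop :=
  s ≤ t ∧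
  lam / (n : ℝ) + iv q + s / (n : ℝ) = iv p + t / (n : ℝ) ∧
  iv q ≤ iv p ∧
  0 < iv q + s / (n : ℝ) ∧
  iv p + t / (n : ℝ) < 1 ∧
  (s = t → q ≠ ∞ ∧ p ≠ 1)

end
/-- The Euclidean norm on coordinate vectors is the norm of `EuclideanSpace`. -/
lemma rnorm_eq_norm {n : ℕ} (x : Fin n → ℝ) : rnorm x = ‖WithLp.toLp 2 x‖ := by
  simp [rnorm, EuclideanSpace.norm_eq]

/-- The local singularity `|z|^(-c)`, cut off to the unit ball. -/
noncomputable def localSing (n : ℕ) (c : ℝ) : EuclideanSpace ℝ (Fin n) → ℝ :=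
  (Metric.ball 0 1).indicator (fun z => ‖z‖ ^ (-c))

lemma localSing_nonneg (n : ℕ) (c : ℝ) (z : EuclideanSpace ℝ (Fin n)) : 0 ≤ localSing n c z :=
  Set.indicator_nonneg (fun _ _ => by positivity) z

lemma localSing_of_norm_lt {n : ℕ} (c : ℝ) {z : EuclideanSpace ℝ (Fin n)} (hz : ‖z‖ < 1) :
    localSing n c z = ‖z‖ ^ (-c) :=
  Set.indicator_of_mem (by simpa using hz) _

lemma measurable_localSing (n : ℕ) (c : ℝ) : Measurable (localSing n c) :=
  (by fun_prop : Measurable fun z : EuclideanSpace ℝ (Fin n) => ‖z‖ ^ (-c)).indicator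
    measurableSet_ball

lemma lintegral_localSing_lt_top {n : ℕ} (hn : 1 ≤ n) {c : ℝ} (hc : c < n) :
    ∫⁻ z, ENNReal.ofReal (localSing n c z) < ∞ := by
  have h : IntegrableOn (fun z : EuclideanSpace ℝ (Fin n) => ‖z‖ ^ (-c)) (Metric.ball 0 1) := by
    refine integrableOn_ball_of_norm_le_rpow (C := 1) (α := c) (by simpa using hn)
      (by simpa using hc) (Filter.Eventually.of_forall fun z => ?_)
      (by fun_prop : Measurable _).aestronglyMeasurable
    rw [one_mul, Real.norm_of_nonneg (by positivity)]
  exact (h.integrable_indicator measurableSet_ball).lintegral_lt_top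

lemma rpow_neg_le_of_div_nine_le {a t u : ℝ} (ha : 0 ≤ a) (ht : 0 < t) (hu : t / 9 ≤ u) :
    u ^ (-a) ≤ 9 ^ a * t ^ (-a) := by
  calc u ^ (-a) ≤ (t / 9) ^ (-a) :=
        Real.rpow_le_rpow_of_nonpos (by positivity) hu (by linarith)
    _ = 9 ^ a * t ^ (-a) := by
        rw [Real.div_rpow ht.le (by norm_num), Real.rpow_neg (by norm_num : (0 : ℝ) ≤ 9), div_inv_eq_mul,
          mul_comm]

/-- Pointwise domination of the kernel by its two local singularities and its decay at infinity. -/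
lemma kernel_le {n : ℕ} {a b : ℝ} (ha : 0 ≤ a) (hb : 0 ≤ b) {e : EuclideanSpace ℝ (Fin n)}
    (he : ‖e‖ = 1) (z : EuclideanSpace ℝ (Fin n)) :
    ‖e - z‖ ^ (-a) * ‖z‖ ^ (-b) ≤
      9 ^ (a + b) * (localSing n b z + localSing n a (e - z) + (1 + ‖z‖) ^ (-(a + b))) := by
  have hez : 1 ≤ ‖e - z‖ + ‖z‖ := by
    have := norm_add_le (e - z) z
    rwa [sub_add_cancel, he] at this
  have hze : ‖z‖ ≤ 1 + ‖e - z‖ := by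
    have := norm_sub_le e (e - z)
    rwa [sub_sub_cancel, he] at this
  have hb' := localSing_nonneg n b z
  have ha' := localSing_nonneg n a (e - z)
  have hab' : 0 ≤ (1 + ‖z‖) ^ (-(a + b)) := by positivity
  have h9a : (9 : ℝ) ^ a ≤ 9 ^ (a + b) :=
    Real.rpow_le_rpow_of_exponent_le (by norm_num) (by linarith)
  have h9b : (9 : ℝ) ^ b ≤ 9 ^ (a + b) :=
    Real.rpow_le_rpow_of_exponent_le (by norm_num) (by linarith)
  by_cases h1 : ‖z‖ < 1 / 2
  · have hu := rpow_neg_le_of_div_nine_le (u := ‖e - z‖) ha one_pos (by linarith)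
    rw [Real.one_rpow, mul_one] at hu
    calc ‖e - z‖ ^ (-a) * ‖z‖ ^ (-b) ≤ 9 ^ (a + b) * localSing n b z := by
          rw [localSing_of_norm_lt b (by linarith)]
          gcongr
          exact hu.trans h9a
      _ ≤ _ := by gcongr; linarith
  by_cases h2 : ‖e - z‖ < 1 / 2
  · have hu := rpow_neg_le_of_div_nine_le (u := ‖z‖) hb one_pos (by linarith)
    rw [Real.one_rpow, mul_one] at hu
    calc ‖e - z‖ ^ (-a) * ‖z‖ ^ (-b) ≤ 9 ^ (a + b) * localSing n a (e - z) := by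
          rw [localSing_of_norm_lt a (by linarith), mul_comm]
          gcongr
          exact hu.trans h9b
      _ ≤ _ := by gcongr; linarith
  · -- Away from both singularities, `|z|` and `|e - z|` are both at least `(1 + |z|) / 9`.
    have hpos : 0 < 1 + ‖z‖ := by positivity
    have hu := rpow_neg_le_of_div_nine_le (u := ‖e - z‖) ha hpos (by linarith)
    have hv := rpow_neg_le_of_div_nine_le (u := ‖z‖) hb hpos (by linarith)
    calc ‖e - z‖ ^ (-a) * ‖z‖ ^ (-b)
        ≤ (9 ^ a * (1 + ‖z‖) ^ (-a)) * (9 ^ b * (1 + ‖z‖) ^ (-b)) := by gcongr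
      _ = 9 ^ (a + b) * (1 + ‖z‖) ^ (-(a + b)) := by
          rw [neg_add, Real.rpow_add hpos, Real.rpow_add (by norm_num : (0 : ℝ) < 9)]
          ring
      _ ≤ _ := by gcongr; linarith

/-- The dilation-normalized integral is bounded uniformly over unit vectors `e`. -/
lemma exists_kernel_bound {n : ℕ} (hn : 1 ≤ n) {a b : ℝ} (ha : 0 ≤ a) (hb : 0 ≤ b)
    (han : a < n) (hbn : b < n) (hab : n < a + b) :
    ∃ B : ℝ≥0∞, B < ∞ ∧ ∀ e : EuclideanSpace ℝ (Fin n), ‖e‖ = 1 →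
      ∫⁻ z, ENNReal.ofReal (‖e - z‖ ^ (-a) * ‖z‖ ^ (-b)) ≤ B := by
  refine ⟨ENNReal.ofReal (9 ^ (a + b)) * ((∫⁻ z, ENNReal.ofReal (localSing n b z)) +
    (∫⁻ z, ENNReal.ofReal (localSing n a z)) +
    ∫⁻ z : EuclideanSpace ℝ (Fin n), ENNReal.ofReal ((1 + ‖z‖) ^ (-(a + b)))), ?_, ?_⟩
  · have h1 := lintegral_localSing_lt_top hn hbn
    have h2 := lintegral_localSing_lt_top hn han
    have h3 : ∫⁻ z : EuclideanSpace ℝ (Fin n), ENNReal.ofReal ((1 + ‖z‖) ^ (-(a + b))) < ∞ :=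
      finite_integral_one_add_norm (by simpa using hab)
    exact ENNReal.mul_lt_top ENNReal.ofReal_lt_top
      (ENNReal.add_lt_top.2 ⟨ENNReal.add_lt_top.2 ⟨h1, h2⟩, h3⟩)
  · intro e he
    have hma := (measurable_localSing n a).ennreal_ofReal
    have hmb := (measurable_localSing n b).ennreal_ofReal
    have hma' : Measurable fun z => ENNReal.ofReal (localSing n a (e - z)) :=
      hma.comp (measurable_const.sub measurable_id)
    have hsum : Measurable fun z =>
        ENNReal.ofReal (localSing n b z) + ENNReal.ofReal (localSing n a (e - z)) := hmb.add hma'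
    rw [← lintegral_sub_left_eq_self (fun z => ENNReal.ofReal (localSing n a z)) e,
      ← lintegral_add_left hmb, ← lintegral_add_left hsum,
      ← lintegral_const_mul' _ _ ENNReal.ofReal_ne_top]
    refine lintegral_mono fun z => ?_
    have hb' := localSing_nonneg n b z
    have ha' := localSing_nonneg n a (e - z)
    rw [← ENNReal.ofReal_add hb' ha', ← ENNReal.ofReal_add (by positivity) (by positivity),
      ← ENNReal.ofReal_mul (by positivity)]
    exact ENNReal.ofReal_le_ofReal (kernel_le ha hb he z)

/-- The substitution `y = r z`. -/
lemma lintegral_dilate {n : ℕ} {r : ℝ} (hr : 0 < r) {F : EuclideanSpace ℝ (Fin n) → ℝ≥0∞}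
    (hF : Measurable F) :
    ∫⁻ y, F y = ENNReal.ofReal (r ^ n) * ∫⁻ z, F (r • z) := by
  have h : ∫⁻ z, F (r • z) = ENNReal.ofReal (r ^ n)⁻¹ * ∫⁻ y, F y := by
    rw [← lintegral_map hF (measurable_const_smul r), Measure.map_addHaar_smul _ hr.ne',
      lintegral_smul_measure, finrank_euclideanSpace_fin, abs_of_pos (by positivity), smul_eq_mul]
  rw [h, ← mul_assoc, ← ENNReal.ofReal_mul (by positivity), mul_inv_cancel₀ (by positivity),
    ENNReal.ofReal_one, one_mul]

/-- integral capability of the power weight `|x|`. -/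
theorem integral_capability_power_weight
    (n : ℕ) (hn : 1 ≤ n) (s s₁ s₂ : ℝ) (hs : 0 < s) (h₁ : s < s₁) (h₂ : s < s₂) :
    ∃ C : ℝ≥0, ∀ x : Fin n → ℝ,
      (∫⁻ y, ENNReal.ofReal (rnorm x ^ s / (rnorm (x - y) ^ s₁ * rnorm y ^ s₂))
          ^ ((n : ℝ) / (s₁ + s₂ - s))) ^ ((s₁ + s₂ - s) / (n : ℝ)) ≤ C := by
  have hn' : (0 : ℝ) < n := by exact_mod_cast hn
  have hd : 0 < s₁ + s₂ - s := by linarith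
  set p : ℝ := (n : ℝ) / (s₁ + s₂ - s) with hp_def
  have hp : 0 < p := by positivity
  have hdp : (s₁ + s₂ - s) * p = n := by rw [hp_def]; field_simp
  obtain ⟨B, hB, hBle⟩ := exists_kernel_bound hn (a := s₁ * p) (b := s₂ * p)
    (mul_pos (hs.trans h₁) hp).le (mul_pos (hs.trans h₂) hp).le
    (by nlinarith) (by nlinarith) (by nlinarith)
  have hq : 0 ≤ (s₁ + s₂ - s) / (n : ℝ) := by positivity
  refine ⟨(B ^ ((s₁ + s₂ - s) / (n : ℝ))).toNNReal, fun x => ?_⟩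
  rw [ENNReal.coe_toNNReal (ENNReal.rpow_lt_top_of_nonneg hq hB.ne).ne]
  refine ENNReal.rpow_le_rpow ?_ hq
  simp only [rnorm_eq_norm, WithLp.toLp_sub]
  set X := WithLp.toLp 2 x
  rcases eq_or_ne X 0 with hX | hX
  · -- Here the integrand vanishes identically, as `0 ^ s = 0`.
    simp [hX, Real.zero_rpow hs.ne', ENNReal.zero_rpow_of_pos hp]
  have hr : 0 < ‖X‖ := norm_pos_iff.2 hX
  set r := ‖X‖ with hr_def
  set F : EuclideanSpace ℝ (Fin n) → ℝ≥0∞ := fun y =>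
    ENNReal.ofReal (r ^ s / (‖X - y‖ ^ s₁ * ‖y‖ ^ s₂)) ^ p with hF_def
  have hF : Measurable F := by fun_prop
  have hFr : ∀ z, F (r • z) = ENNReal.ofReal (r ^ n)⁻¹ *
      ENNReal.ofReal (‖r⁻¹ • X - z‖ ^ (-(s₁ * p)) * ‖z‖ ^ (-(s₂ * p))) := by
    intro z
    have h1 : X - r • z = r • (r⁻¹ • X - z) := by
      rw [smul_sub, smul_smul, mul_inv_cancel₀ hr.ne', one_smul]
    have hrn : (r ^ n)⁻¹ = r ^ (s * p) * r ^ (-(s₁ * p)) * r ^ (-(s₂ * p)) := by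
      rw [← Real.rpow_add hr, ← Real.rpow_add hr, ← Real.rpow_natCast, ← Real.rpow_neg hr.le]
      congr 1
      linarith
    simp only [hF_def]
    rw [ENNReal.ofReal_rpow_of_nonneg (by positivity) hp.le, ← ENNReal.ofReal_mul (by positivity),
      h1, norm_smul, norm_smul, Real.norm_of_nonneg hr.le, hrn]
    congr 1
    set u := ‖r⁻¹ • X - z‖
    have hu : 0 ≤ u := norm_nonneg _
    rw [Real.div_rpow (by positivity) (by positivity), Real.mul_rpow (by positivity) (by positivity),
      ← Real.rpow_mul hr.le, ← Real.rpow_mul (by positivity), ← Real.rpow_mul (by positivity),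
      Real.mul_rpow hr.le hu, Real.mul_rpow hr.le (norm_nonneg z), Real.rpow_neg hr.le,
      Real.rpow_neg hr.le, Real.rpow_neg hu, Real.rpow_neg (norm_nonneg z), div_eq_mul_inv]
    simp only [mul_inv]
    ring
  have he : ‖r⁻¹ • X‖ = 1 := by
    rw [norm_smul, norm_inv, Real.norm_of_nonneg hr.le, ← hr_def, inv_mul_cancel₀ hr.ne']
  calc ∫⁻ y, F (WithLp.toLp 2 y) = ∫⁻ y, F y :=
        (PiLp.volume_preserving_toLp (Fin n)).lintegral_comp hF
    _ = ENNReal.ofReal (r ^ n) * ∫⁻ z, F (r • z) := lintegral_dilate hr hF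
    _ = ∫⁻ z, ENNReal.ofReal (‖r⁻¹ • X - z‖ ^ (-(s₁ * p)) * ‖z‖ ^ (-(s₂ * p))) := by
        simp only [hFr]
        rw [lintegral_const_mul' _ _ ENNReal.ofReal_ne_top, ← mul_assoc,
          ← ENNReal.ofReal_mul (by positivity), mul_inv_cancel₀ (by positivity),
          ENNReal.ofReal_one, one_mul]
    _ ≤ B := hBle _ he
end

section
/- Let n ≥ 1, 0 < q, q₁, q₂ ≤ ∞ and s > 0. If 1/q ≤ 1/q₁, 1/q ≤ 1/q₂ and 1 + 1/q < 1/q₁ + 1/q₂ + s/n, then the discrete weighted Young inequality l(q₁,s) ∗ l(q₂,s) ⊂ l(q,s) holds, i.e., there is a constant C with ‖a∗b‖_{l(q,s)} ≤ C‖a‖_{l(q₁,s)}‖b‖_{l(q₂,s)} for all nonnegative sequences a, b. -/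
/-!
Since `⟨k⟩^s ≲ ⟨k-j⟩^s + ⟨j⟩^s` for `s > 0`, with `A = ⟨·⟩^s a` and `B = ⟨·⟩^s b` one has
`⟨·⟩^s (a ∗ b) ≲ A ∗ (⟨·⟩^{-s} B) + B ∗ (⟨·⟩^{-s} A)` (`dconv_mul_wt_le`), so it suffices to bound
each summand in `ℓ^q` by `‖A‖_{q₁} ‖B‖_{q₂}`; this is `exists_recipNorm_dconv_wt_neg_le`.

Write `t, u, v` for the reciprocals of `q` and of the exponents of the two factors. If `t ≤ 1`,
Young's inequality (`recipNorm_dconv_le`) is applied with reciprocal exponents `u' = min u 1` and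
`v' = 1 + t - u'`. The first factor is controlled by the embedding `ℓ^{1/u} ⊂ ℓ^{1/u'}`. For the
second, the hypotheses give `v' < v + s/n`, so `⟨·⟩^{-s} ℓ^{1/v} ⊂ ℓ^{1/v'}`, by the embedding of
`ℓ^p` spaces if `v' ≤ v` and otherwise by Hölder's inequality and the convergence of
`∑ ⟨k⟩^{-r}` for `r > n` (`exists_recipNorm_wt_neg_mul_le`). If `t > 1`, then `ℓ^q` is itself a
convolution algebra and contains both factors.

All (quasi-)norms are indexed by the reciprocal `t = 1/q ∈ [0,∞)` of the exponent, which makes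
the conditions on exponents linear and includes `q = ∞` as `t = 0`.
-/

open scoped ENNReal NNReal BigOperators
open MeasureTheory

/-! ### Quasi-norms indexed by the reciprocal exponent -/

noncomputable section

/-- The unweighted `ℓ^{1/t}` quasi-norm of a family in `[0,∞]`, indexed by the reciprocal
exponent `t ≥ 0`: the supremum if `t = 0`, otherwise `(∑ f_k^{1/t})^t`. -/
def recipNorm {ι : Type*} (t : ℝ) (f : ι → ℝ≥0∞) : ℝ≥0∞ :=
  if t = 0 then ⨆ k, f k else (∑' k, f k ^ (1 / t)) ^ t

section RecipNorm

variable {ι : Type*}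

lemma recipNorm_zero (f : ι → ℝ≥0∞) : recipNorm 0 f = ⨆ k, f k := by simp [recipNorm]

lemma recipNorm_pos {t : ℝ} (ht : 0 < t) (f : ι → ℝ≥0∞) :
    recipNorm t f = (∑' k, f k ^ (1 / t)) ^ t := by simp [recipNorm, ht.ne']

lemma recipNorm_one (f : ι → ℝ≥0∞) : recipNorm 1 f = ∑' k, f k := by simp [recipNorm]

lemma recipNorm_mono {t : ℝ} (ht : 0 ≤ t) {f g : ι → ℝ≥0∞} (h : ∀ k, f k ≤ g k) :
    recipNorm t f ≤ recipNorm t g := by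
  rcases ht.eq_or_lt with rfl | ht
  · rw [recipNorm_zero, recipNorm_zero]
    exact iSup_mono h
  · rw [recipNorm_pos ht, recipNorm_pos ht]
    gcongr with k
    exact h k

lemma recipNorm_const_mul {t : ℝ} (ht : 0 ≤ t) (c : ℝ≥0∞) (f : ι → ℝ≥0∞) :
    recipNorm t (fun k => c * f k) = c * recipNorm t f := by
  rcases ht.eq_or_lt with rfl | ht
  · rw [recipNorm_zero, recipNorm_zero, ENNReal.mul_iSup]
  · rw [recipNorm_pos ht, recipNorm_pos ht]
    simp_rw [ENNReal.mul_rpow_of_nonneg _ _ (one_div_pos.2 ht).le]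
    rw [ENNReal.tsum_mul_left, ENNReal.mul_rpow_of_nonneg _ _ ht.le, ← ENNReal.rpow_mul,
      one_div_mul_cancel ht.ne', ENNReal.rpow_one]

lemma rpow_tsum_le_tsum_rpow {θ : ℝ} (h0 : 0 < θ) (h1 : θ ≤ 1) (f : ι → ℝ≥0∞) :
    (∑' k, f k) ^ θ ≤ ∑' k, f k ^ θ := by
  classical
  have fin : ∀ S : Finset ι, (∑ k ∈ S, f k) ^ θ ≤ ∑ k ∈ S, f k ^ θ := by
    intro S
    induction S using Finset.induction_on with
    | empty => simp [h0]
    | insert i S hi ih =>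
      rw [Finset.sum_insert hi, Finset.sum_insert hi]
      exact (ENNReal.rpow_add_le_add_rpow _ _ h0.le h1).trans (by gcongr)
  rw [← ENNReal.le_rpow_inv_iff h0, ENNReal.tsum_eq_iSup_sum]
  refine iSup_le fun S => ?_
  rw [ENNReal.le_rpow_inv_iff h0]
  exact (fin S).trans (ENNReal.sum_le_tsum S)

/-- The embedding `ℓ^p ⊂ ℓ^q` for `p ≤ q`, with constant `1`. -/
lemma recipNorm_le_of_le {t u : ℝ} (ht : 0 ≤ t) (htu : t ≤ u) (f : ι → ℝ≥0∞) :
    recipNorm t f ≤ recipNorm u f := by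
  rcases htu.eq_or_lt with rfl | htu
  · exact le_rfl
  have hu : 0 < u := ht.trans_lt htu
  rw [recipNorm_pos hu]
  rcases ht.eq_or_lt with rfl | ht
  · rw [recipNorm_zero]
    refine iSup_le fun k => ?_
    calc f k = (f k ^ (1 / u)) ^ u := by
          rw [← ENNReal.rpow_mul, one_div_mul_cancel hu.ne', ENNReal.rpow_one]
      _ ≤ _ := by
          gcongr
          exact ENNReal.le_tsum (f := fun k => f k ^ (1 / u)) k
  · rw [recipNorm_pos ht]
    calc (∑' k, f k ^ (1 / t)) ^ t = ((∑' k, f k ^ (1 / t)) ^ (t / u)) ^ u := by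
          rw [← ENNReal.rpow_mul, div_mul_cancel₀ _ hu.ne']
      _ ≤ (∑' k, (f k ^ (1 / t)) ^ (t / u)) ^ u := by
          gcongr
          exact rpow_tsum_le_tsum_rpow (by positivity) ((div_le_one hu).2 htu.le) _
      _ = _ := by
          simp_rw [← ENNReal.rpow_mul]
          congr 3
          field_simp

lemma add_rpow_le {e : ℝ} (he : 0 ≤ e) (x y : ℝ≥0∞) :
    (x + y) ^ e ≤ 2 ^ e * (x ^ e + y ^ e) := by
  rcases le_total x y with h | h
  · calc (x + y) ^ e ≤ (2 * y) ^ e := by rw [two_mul]; gcongr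
      _ = 2 ^ e * y ^ e := ENNReal.mul_rpow_of_nonneg _ _ he
      _ ≤ _ := by gcongr; exact le_add_self
  · calc (x + y) ^ e ≤ (2 * x) ^ e := by rw [two_mul]; gcongr
      _ = 2 ^ e * x ^ e := ENNReal.mul_rpow_of_nonneg _ _ he
      _ ≤ _ := by gcongr; exact le_self_add

/-- The quasi-triangle inequality, with a constant valid for all exponents in `(0,∞]`. -/
lemma recipNorm_add_le {t : ℝ} (ht : 0 ≤ t) (f g : ι → ℝ≥0∞) :
    recipNorm t (fun k => f k + g k) ≤ 2 * 2 ^ t * (recipNorm t f + recipNorm t g) := by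
  rcases ht.eq_or_lt with rfl | ht
  · simp only [recipNorm_zero, ENNReal.rpow_zero, mul_one]
    refine iSup_le fun k => ?_
    calc f k + g k ≤ (⨆ k, f k) + ⨆ k, g k := add_le_add (le_iSup f k) (le_iSup g k)
      _ ≤ _ := by rw [two_mul]; exact le_self_add
  · simp only [recipNorm_pos ht]
    calc (∑' k, (f k + g k) ^ (1 / t)) ^ t
        ≤ (∑' k, 2 ^ (1 / t) * (f k ^ (1 / t) + g k ^ (1 / t))) ^ t := by
          gcongr with k
          exact add_rpow_le (by positivity) _ _
      _ = 2 * (∑' k, f k ^ (1 / t) + ∑' k, g k ^ (1 / t)) ^ t := by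
          rw [ENNReal.tsum_mul_left, ENNReal.tsum_add, ENNReal.mul_rpow_of_nonneg _ _ ht.le,
            ← ENNReal.rpow_mul, one_div_mul_cancel ht.ne', ENNReal.rpow_one]
      _ ≤ 2 * (2 ^ t * ((∑' k, f k ^ (1 / t)) ^ t + (∑' k, g k ^ (1 / t)) ^ t)) := by
          gcongr
          exact add_rpow_le ht.le _ _
      _ = _ := by rw [mul_assoc]

/-- Hölder's inequality in `ℓ^{1/(u+v)}`, for arbitrary exponents in `(0,∞]`. -/
lemma recipNorm_mul_le {u v : ℝ} (hu : 0 ≤ u) (hv : 0 < v) (f g : ι → ℝ≥0∞) :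
    recipNorm (u + v) (fun k => f k * g k) ≤ recipNorm u f * recipNorm v g := by
  rcases hu.eq_or_lt with rfl | hu
  · rw [zero_add, recipNorm_zero, ← recipNorm_const_mul hv.le]
    refine recipNorm_mono hv.le fun k => ?_
    gcongr
    exact le_iSup f k
  have ht : 0 < u + v := by positivity
  rw [recipNorm_pos hu, recipNorm_pos hv, recipNorm_pos ht]
  have key : ∑' k, (f k * g k) ^ (1 / (u + v))
      ≤ (∑' k, f k ^ (1 / u)) ^ (u / (u + v)) * (∑' k, g k ^ (1 / v)) ^ (v / (u + v)) := by
    let _ : MeasurableSpace ι := ⊤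
    have := ENNReal.lintegral_mul_norm_pow_le (μ := (Measure.count : Measure ι))
      (f := fun k => f k ^ (1 / u)) (g := fun k => g k ^ (1 / v))
      measurable_from_top.aemeasurable measurable_from_top.aemeasurable
      (p := u / (u + v)) (q := v / (u + v)) (by positivity) (by positivity) (by field_simp)
    simp only [lintegral_count] at this
    refine le_trans (le_of_eq (tsum_congr fun k => ?_)) this
    rw [ENNReal.mul_rpow_of_nonneg _ _ (by positivity), ← ENNReal.rpow_mul, ← ENNReal.rpow_mul]
    congr 2 <;> field_simp
  calc _ ≤ ((∑' k, f k ^ (1 / u)) ^ (u / (u + v)) *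
        (∑' k, g k ^ (1 / v)) ^ (v / (u + v))) ^ (u + v) := by gcongr
    _ = _ := by
      rw [ENNReal.mul_rpow_of_nonneg _ _ ht.le, ← ENNReal.rpow_mul, ← ENNReal.rpow_mul,
        div_mul_cancel₀ _ ht.ne', div_mul_cancel₀ _ ht.ne']

end RecipNorm

/-! ### Convolution without weights -/

section Convolution

variable {n : ℕ}

lemma dconv_comm (f g : (Fin n → ℤ) → ℝ≥0∞) : dconv f g = dconv g f := by
  funext k
  unfold dconv
  rw [← (Equiv.subLeft k).tsum_eq]
  refine tsum_congr fun j => ?_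
  simp [mul_comm]

lemma tsum_translate_reflect (f : (Fin n → ℤ) → ℝ≥0∞) (k : Fin n → ℤ) :
    ∑' j, f (k - j) = ∑' j, f j :=
  (Equiv.subLeft k).tsum_eq f

lemma tsum_dconv (f g : (Fin n → ℤ) → ℝ≥0∞) :
    ∑' k, dconv f g k = (∑' k, f k) * ∑' k, g k := by
  unfold dconv
  rw [ENNReal.tsum_comm, ← ENNReal.tsum_mul_left]
  refine tsum_congr fun j => ?_
  rw [ENNReal.tsum_mul_right]
  congr 1
  exact (Equiv.subRight j).tsum_eq f

/-- The three-factor Hölder estimate behind Young's inequality: write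
`f(k-j) g(j) = (f(k-j)^{1/u} g(j)^{1/v})^t (f(k-j)^{1/u})^{u-t} (g(j)^{1/v})^{v-t}`. -/
lemma dconv_le_holder {t u v : ℝ} (ht : 0 ≤ t) (hu : 0 < u) (hv : 0 < v) (htu : t ≤ u)
    (htv : t ≤ v) (h : 1 + t = u + v) (f g : (Fin n → ℤ) → ℝ≥0∞) (k : Fin n → ℤ) :
    dconv f g k ≤ dconv (fun j => f j ^ (1 / u)) (fun j => g j ^ (1 / v)) k ^ t *
      ((∑' j, f j ^ (1 / u)) ^ (u - t) * (∑' j, g j ^ (1 / v)) ^ (v - t)) := by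
  let _ : MeasurableSpace (Fin n → ℤ) := ⊤
  have := ENNReal.lintegral_prod_norm_pow_le (μ := (Measure.count : Measure (Fin n → ℤ)))
    (Finset.univ : Finset (Fin 3))
    (f := ![fun j => f (k - j) ^ (1 / u) * g j ^ (1 / v), fun j => f (k - j) ^ (1 / u),
      fun j => g j ^ (1 / v)])
    (p := ![t, u - t, v - t]) (fun i _ => measurable_from_top.aemeasurable)
    (by simp [Fin.sum_univ_three]; linarith)
    (by
      intro i _
      fin_cases i
      · exact ht
      · exact sub_nonneg.2 htu
      · exact sub_nonneg.2 htv)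
  simp only [lintegral_count, Fin.prod_univ_three, Matrix.cons_val_zero, Matrix.cons_val_one,
    Matrix.cons_val_two, Matrix.tail_cons, Matrix.head_cons] at this
  rw [tsum_translate_reflect (fun j => f j ^ (1 / u)) k, mul_assoc] at this
  refine le_trans (le_of_eq (tsum_congr fun j => ?_)) this
  have hp : ∀ (x : ℝ≥0∞) {w : ℝ}, 0 < w → t ≤ w →
      (x ^ (1 / w)) ^ t * (x ^ (1 / w)) ^ (w - t) = x := by
    intro x w hw htw
    rw [← ENNReal.rpow_add_of_nonneg _ _ ht (sub_nonneg.2 htw), add_sub_cancel, ← ENNReal.rpow_mul,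
      one_div_mul_cancel hw.ne', ENNReal.rpow_one]
  rw [ENNReal.mul_rpow_of_nonneg _ _ ht]
  conv_lhs => rw [← hp (f (k - j)) hu htu, ← hp (g j) hv htv]
  ring

lemma dconv_le_iSup_mul_tsum (f g : (Fin n → ℤ) → ℝ≥0∞) (k : Fin n → ℤ) :
    dconv f g k ≤ (⨆ j, f j) * ∑' j, g j := by
  rw [← ENNReal.tsum_mul_left]
  refine ENNReal.tsum_le_tsum fun j => ?_
  gcongr
  exact le_iSup f _

/-- Young's inequality `ℓ^{1/u} ∗ ℓ^{1/v} ⊂ ℓ^{1/t}`, `1 + t = u + v`, for exponents in `[1,∞]`. -/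
lemma recipNorm_dconv_le {t u v : ℝ} (ht : 0 ≤ t) (htu : t ≤ u) (htv : t ≤ v)
    (h : 1 + t = u + v) (f g : (Fin n → ℤ) → ℝ≥0∞) :
    recipNorm t (dconv f g) ≤ recipNorm u f * recipNorm v g := by
  rcases (ht.trans htu).eq_or_lt with rfl | hu
  · obtain rfl : t = 0 := le_antisymm htu ht
    obtain rfl : v = 1 := by linarith
    rw [recipNorm_zero, recipNorm_zero, recipNorm_one]
    exact iSup_le (dconv_le_iSup_mul_tsum f g)
  rcases (ht.trans htv).eq_or_lt with rfl | hv
  · obtain rfl : t = 0 := le_antisymm htv ht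
    obtain rfl : u = 1 := by linarith
    rw [recipNorm_zero, recipNorm_zero, recipNorm_one, dconv_comm, mul_comm]
    exact iSup_le (dconv_le_iSup_mul_tsum g f)
  rw [recipNorm_pos hu, recipNorm_pos hv]
  have key := dconv_le_holder ht hu hv htu htv h f g
  set F := ∑' j, f j ^ (1 / u)
  set G := ∑' j, g j ^ (1 / v)
  rcases ht.eq_or_lt with rfl | ht'
  · rw [recipNorm_zero]
    exact iSup_le fun k => by simpa using key k
  · refine (recipNorm_mono ht key).trans (le_of_eq ?_)
    simp_rw [mul_comm _ (F ^ (u - t) * G ^ (v - t))]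
    rw [recipNorm_const_mul ht, recipNorm_pos ht']
    simp_rw [← ENNReal.rpow_mul, mul_one_div_cancel ht'.ne', ENNReal.rpow_one]
    rw [tsum_dconv, ENNReal.mul_rpow_of_nonneg _ _ ht]
    calc F ^ (u - t) * G ^ (v - t) * (F ^ t * G ^ t)
        = (F ^ (u - t) * F ^ t) * (G ^ (v - t) * G ^ t) := by ring
      _ = F ^ u * G ^ v := by
        rw [← ENNReal.rpow_add_of_nonneg _ _ (sub_nonneg.2 htu) ht,
          ← ENNReal.rpow_add_of_nonneg _ _ (sub_nonneg.2 htv) ht, sub_add_cancel, sub_add_cancel]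

/-- For exponents `1/t ≤ 1`, `ℓ^{1/t}` is a convolution algebra, by subadditivity of
`x ↦ x^{1/t}`. -/
lemma recipNorm_dconv_le_of_one_le {t : ℝ} (ht : 1 ≤ t) (f g : (Fin n → ℤ) → ℝ≥0∞) :
    recipNorm t (dconv f g) ≤ recipNorm t f * recipNorm t g := by
  have ht0 : 0 < t := by linarith
  simp only [recipNorm_pos ht0]
  rw [← ENNReal.mul_rpow_of_nonneg _ _ ht0.le, ← tsum_dconv]
  gcongr with k
  refine (rpow_tsum_le_tsum_rpow (by positivity) ((div_le_one ht0).2 ht) _).trans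
    (le_of_eq (tsum_congr fun j => ?_))
  rw [ENNReal.mul_rpow_of_nonneg _ _ (by positivity)]

end Convolution

/-! ### The weight -/

section Weight

variable {n : ℕ}

lemma one_le_zbr (k : Fin n → ℤ) : 1 ≤ zbr k :=
  Real.one_le_sqrt.2 (le_add_of_nonneg_right (Finset.sum_nonneg fun _ _ => sq_nonneg _))

lemma zbr_pos (k : Fin n → ℤ) : 0 < zbr k := one_pos.trans_le (one_le_zbr k)

lemma zbr_add_le (j k : Fin n → ℤ) : zbr (j + k) ≤ 2 * max (zbr j) (zbr k) := by
  have hsq : ∀ i : Fin n → ℤ, zbr i ^ 2 = 1 + ∑ l, (i l : ℝ) ^ 2 := fun i =>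
    Real.sq_sqrt (add_nonneg zero_le_one (Finset.sum_nonneg fun _ _ => sq_nonneg _))
  have hsum : ∑ l, (((j + k) l : ℤ) : ℝ) ^ 2
      ≤ 2 * ∑ l, (j l : ℝ) ^ 2 + 2 * ∑ l, (k l : ℝ) ^ 2 := by
    rw [Finset.mul_sum, Finset.mul_sum, ← Finset.sum_add_distrib]
    refine Finset.sum_le_sum fun l _ => ?_
    push_cast [Pi.add_apply]
    nlinarith [sq_nonneg ((j l : ℝ) - k l)]
  have hm : 0 ≤ max (zbr j) (zbr k) := (zbr_pos j).le.trans (le_max_left _ _)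
  refine (sq_le_sq₀ (zbr_pos _).le (by positivity)).1 ?_
  have h1 : zbr j ^ 2 ≤ max (zbr j) (zbr k) ^ 2 :=
    pow_le_pow_left₀ (zbr_pos j).le (le_max_left _ _) 2
  have h2 : zbr k ^ 2 ≤ max (zbr j) (zbr k) ^ 2 :=
    pow_le_pow_left₀ (zbr_pos k).le (le_max_right _ _) 2
  rw [hsq] at h1 h2 ⊢
  nlinarith

/-- The weight `⟨k⟩^s` as an element of `[0,∞]`. -/
def wt (s : ℝ) (k : Fin n → ℤ) : ℝ≥0∞ := ENNReal.ofReal (zbr k ^ s)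

lemma wt_neg_mul_wt (s : ℝ) (k : Fin n → ℤ) : wt (-s) k * wt s k = 1 := by
  rw [wt, wt, ← ENNReal.ofReal_mul (Real.rpow_nonneg (zbr_pos k).le _), ← Real.rpow_add (zbr_pos k)]
  simp

lemma wt_add_le {s : ℝ} (hs : 0 ≤ s) (j k : Fin n → ℤ) :
    wt s (j + k) ≤ ENNReal.ofReal (2 ^ s) * (wt s j + wt s k) := by
  have hj := Real.rpow_nonneg (zbr_pos j).le s
  have hk := Real.rpow_nonneg (zbr_pos k).le s
  simp only [wt]
  rw [← ENNReal.ofReal_add hj hk, ← ENNReal.ofReal_mul (by positivity)]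
  refine ENNReal.ofReal_le_ofReal ?_
  refine (Real.rpow_le_rpow (zbr_pos _).le (zbr_add_le j k) hs).trans ?_
  rw [Real.mul_rpow zero_le_two ((zbr_pos j).le.trans (le_max_left _ _))]
  gcongr
  rcases max_choice (zbr j) (zbr k) with h | h <;> rw [h] <;> linarith

lemma wt_neg_le_one {s : ℝ} (hs : 0 ≤ s) (k : Fin n → ℤ) : wt (-s) k ≤ 1 := by
  rw [wt, ENNReal.ofReal_le_one]
  exact Real.rpow_le_one_of_one_le_of_nonpos (one_le_zbr k) (by linarith)

/-- Comparison with the sum of `‖z‖^r` over the lattice `ℤⁿ ⊂ ℝⁿ`, since `⟨k⟩` dominates the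
sup norm of `k`. -/
lemma summable_zbr_rpow {r : ℝ} (hr : r < -(n : ℝ)) :
    Summable fun k : Fin n → ℤ => zbr k ^ r := by
  have hr0 : r ≤ 0 := by linarith [(Nat.cast_nonneg n : (0 : ℝ) ≤ n)]
  let L : Submodule ℤ (Fin n → ℝ) := Submodule.span ℤ (Set.range (Pi.basisFun ℝ (Fin n)))
  have hL : Module.finrank ℤ L = n := (ZLattice.rank ℝ L).trans (by simp)
  have hmem : ∀ k : Fin n → ℤ, (fun i => (k i : ℝ)) ∈ L := by
    intro k
    exact ((Pi.basisFun ℝ (Fin n)).mem_span_iff_repr_mem ℤ _).2 fun i => ⟨k i, by simp⟩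
  let φ : (Fin n → ℤ) → L := fun k => ⟨fun i => (k i : ℝ), hmem k⟩
  have hφ : Function.Injective φ := by
    intro j k h
    funext i
    have : (j i : ℝ) = k i := congrFun (congrArg Subtype.val h) i
    exact_mod_cast this
  have hsum := (ZLattice.summable_norm_rpow L r (by rw [hL]; exact hr)).comp_injective hφ
  refine Summable.of_norm_bounded_eventually hsum ?_
  filter_upwards [(Set.finite_singleton (0 : Fin n → ℤ)).compl_mem_cofinite] with k hk
  have hk0 : φ k ≠ 0 := fun h => hk (hφ (h.trans (by ext; simp [φ])))
  rw [Real.norm_of_nonneg (Real.rpow_nonneg (zbr_pos k).le _)]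
  refine Real.rpow_le_rpow_of_nonpos (norm_pos_iff.2 hk0) ?_ hr0
  change ‖(fun i => (k i : ℝ))‖ ≤ _
  rw [pi_norm_le_iff_of_nonneg (zbr_pos k).le]
  intro i
  rw [Real.norm_eq_abs]
  refine Real.abs_le_sqrt ?_
  have := Finset.single_le_sum (f := fun i => (k i : ℝ) ^ 2) (fun i _ => sq_nonneg _)
    (Finset.mem_univ i)
  linarith

/-- `⟨·⟩^{-s}` lies in `ℓ^{1/t}` as soon as `t < s/n`. -/
lemma recipNorm_wt_neg_lt_top {t s : ℝ} (hn : 1 ≤ n) (ht : 0 < t) (hts : t < s / n) :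
    recipNorm t (wt (n := n) (-s)) < ∞ := by
  have hn0 : (0 : ℝ) < n := by exact_mod_cast hn
  rw [recipNorm_pos ht]
  refine ENNReal.rpow_lt_top_of_nonneg ht.le ?_
  have : ∀ k : Fin n → ℤ, wt (-s) k ^ (1 / t) = ENNReal.ofReal (zbr k ^ (-s / t)) := by
    intro k
    rw [wt, ENNReal.ofReal_rpow_of_pos (Real.rpow_pos_of_pos (zbr_pos k) _),
      ← Real.rpow_mul (zbr_pos k).le, mul_one_div]
  simp_rw [this]
  refine (summable_zbr_rpow ?_).tsum_ofReal_ne_top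
  rw [lt_div_iff₀ hn0] at hts
  rw [div_lt_iff₀ ht]
  linarith

/-- The weight gains up to `s/n` in the reciprocal exponent:
`⟨·⟩^{-s} ℓ^{1/u} ⊂ ℓ^{1/t}` whenever `t < u + s/n`. -/
lemma exists_recipNorm_wt_neg_mul_le {t u s : ℝ} (hn : 1 ≤ n) (ht : 0 ≤ t) (hu : 0 ≤ u)
    (hs : 0 ≤ s) (h : t < u + s / n) : ∃ C : ℝ≥0, ∀ B : (Fin n → ℤ) → ℝ≥0∞,
      recipNorm t (fun k => B k * wt (-s) k) ≤ C * recipNorm u B := by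
  rcases le_or_gt t u with htu | htu
  · refine ⟨1, fun B => ?_⟩
    rw [ENNReal.coe_one, one_mul]
    refine (recipNorm_mono ht fun k => ?_).trans (recipNorm_le_of_le ht htu B)
    exact mul_le_of_le_one_right' (wt_neg_le_one hs k)
  · have hv : 0 < t - u := sub_pos.2 htu
    have hfin := recipNorm_wt_neg_lt_top (s := s) hn hv (by linarith)
    refine ⟨(recipNorm (t - u) (wt (n := n) (-s))).toNNReal, fun B => ?_⟩
    rw [ENNReal.coe_toNNReal hfin.ne, mul_comm]
    simpa using recipNorm_mul_le hu hv B (wt (-s))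

/-- One half of the weighted inequality: `ℓ^{1/u} ∗ (⟨·⟩^{-s} ℓ^{1/v}) ⊂ ℓ^{1/t}`. -/
lemma exists_recipNorm_dconv_wt_neg_le {t u v s : ℝ} (hn : 1 ≤ n) (ht : 0 ≤ t) (hs : 0 < s)
    (htu : t ≤ u) (htv : t ≤ v) (h : 1 + t < u + v + s / n) :
    ∃ C : ℝ≥0, ∀ A B : (Fin n → ℤ) → ℝ≥0∞,
      recipNorm t (dconv A fun k => B k * wt (-s) k) ≤ C * (recipNorm u A * recipNorm v B) := by
  have hσ : 0 < s / n := div_pos hs (by exact_mod_cast hn)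
  rcases le_total t 1 with ht1 | ht1
  · -- Young's inequality with reciprocal exponents `min u 1` and `1 + t - min u 1`
    have hu' : t ≤ min u 1 := le_min htu ht1
    have hv' : t ≤ 1 + t - min u 1 := by linarith [min_le_right u 1]
    have hv : 1 + t - min u 1 < v + s / n := by
      rcases min_choice u 1 with h' | h' <;> rw [h'] <;> linarith
    obtain ⟨C, hC⟩ := exists_recipNorm_wt_neg_mul_le hn (ht.trans hv') (ht.trans htv) hs.le hv
    refine ⟨C, fun A B => ?_⟩
    refine (recipNorm_dconv_le ht hu' hv' (by ring) A _).trans ?_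
    calc _ ≤ recipNorm u A * (C * recipNorm v B) :=
          mul_le_mul' (recipNorm_le_of_le (ht.trans hu') (min_le_left u 1) A) (hC B)
      _ = _ := by ring
  · obtain ⟨C, hC⟩ := exists_recipNorm_wt_neg_mul_le (t := t) (s := s) hn ht (ht.trans htv) hs.le
      (by linarith)
    refine ⟨C, fun A B => ?_⟩
    refine (recipNorm_dconv_le_of_one_le ht1 A _).trans ?_
    calc _ ≤ recipNorm u A * (C * recipNorm v B) :=
          mul_le_mul' (recipNorm_le_of_le ht htu A) (hC B)
      _ = _ := by ring

/-- The pointwise inequality `⟨k⟩^s ≲ ⟨k-j⟩^s + ⟨j⟩^s`, summed against `a_{k-j} b_j`. -/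
lemma dconv_mul_wt_le {s : ℝ} (hs : 0 ≤ s) (a b : (Fin n → ℤ) → ℝ≥0∞) (k : Fin n → ℤ) :
    dconv a b k * wt s k ≤ ENNReal.ofReal (2 ^ s) *
      (dconv (fun j => a j * wt s j) b k + dconv (fun j => b j * wt s j) a k) := by
  rw [dconv_comm _ a]
  unfold dconv
  rw [← ENNReal.tsum_add, ← ENNReal.tsum_mul_left, ← ENNReal.tsum_mul_right]
  refine ENNReal.tsum_le_tsum fun j => ?_
  have := wt_add_le hs (k - j) j
  rw [sub_add_cancel] at this
  calc a (k - j) * b j * wt s k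
      ≤ a (k - j) * b j * (ENNReal.ofReal (2 ^ s) * (wt s (k - j) + wt s j)) := by gcongr
    _ = _ := by ring

lemma iv_nonneg (q : ℝ≥0∞) : 0 ≤ iv q := ENNReal.toReal_nonneg

lemma lns_eq_recipNorm {q : ℝ≥0∞} (hq : 0 < q) (s : ℝ) (a : (Fin n → ℤ) → ℝ≥0∞) :
    lns n q s a = recipNorm (iv q) (fun k => a k * wt s k) := by
  rcases eq_or_ne q ∞ with rfl | hq'
  · simp [lns, recipNorm, iv, wt]
  · have h : 0 < q.toReal := ENNReal.toReal_pos hq.ne' hq'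
    have hiv : iv q = 1 / q.toReal := by rw [iv, ENNReal.toReal_inv, one_div]
    rw [hiv, recipNorm_pos (by positivity), one_div_one_div, lns, if_neg hq']
    rfl

end Weight

end


/-- reduction case of the discrete weighted Young inequality. -/
theorem discrete_weighted_young_reduction
    (n : ℕ) (hn : 1 ≤ n) (q q₁ q₂ : ℝ≥0∞) (hq : 0 < q) (hq₁ : 0 < q₁) (hq₂ : 0 < q₂)
    (s : ℝ) (hs : 0 < s)
    (h₁ : iv q ≤ iv q₁) (h₂ : iv q ≤ iv q₂)
    (h₃ : 1 + iv q < iv q₁ + iv q₂ + s / (n : ℝ)) :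
    ∃ C : ℝ≥0, ∀ a b : (Fin n → ℤ) → ℝ≥0∞,
      lns n q s (dconv a b) ≤ C * lns n q₁ s a * lns n q₂ s b := by
  obtain ⟨C₁, hC₁⟩ := exists_recipNorm_dconv_wt_neg_le hn (iv_nonneg q) hs h₁ h₂ h₃
  obtain ⟨C₂, hC₂⟩ := exists_recipNorm_dconv_wt_neg_le hn (iv_nonneg q) hs h₂ h₁
    (by linarith : 1 + iv q < iv q₂ + iv q₁ + s / (n : ℝ))
  set D : ℝ≥0∞ := ENNReal.ofReal (2 ^ s) * (2 * 2 ^ iv q) with hD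
  have hDtop : D ≠ ∞ := by
    refine ENNReal.mul_ne_top ENNReal.ofReal_ne_top (ENNReal.mul_ne_top (by simp) ?_)
    exact (ENNReal.rpow_lt_top_of_nonneg (iv_nonneg q) (by simp)).ne
  refine ⟨D.toNNReal * (C₁ + C₂), fun a b => ?_⟩
  rw [lns_eq_recipNorm hq, lns_eq_recipNorm hq₁, lns_eq_recipNorm hq₂]
  have cancel : ∀ c : (Fin n → ℤ) → ℝ≥0∞, (fun k => c k * wt s k * wt (-s) k) = c := by
    intro c
    funext k
    rw [mul_assoc, mul_comm (wt s k), wt_neg_mul_wt, mul_one]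
  have e₁ := hC₁ (fun k => a k * wt s k) (fun k => b k * wt s k)
  have e₂ := hC₂ (fun k => b k * wt s k) (fun k => a k * wt s k)
  rw [cancel] at e₁ e₂
  set X := recipNorm (iv q₁) fun k => a k * wt s k
  set Y := recipNorm (iv q₂) fun k => b k * wt s k
  refine (recipNorm_mono (iv_nonneg q) (dconv_mul_wt_le hs.le a b)).trans ?_
  rw [recipNorm_const_mul (iv_nonneg q)]
  calc _ ≤ ENNReal.ofReal (2 ^ s) * (2 * 2 ^ iv q * (C₁ * (X * Y) + C₂ * (Y * X))) := by
        gcongr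
        exact (recipNorm_add_le (iv_nonneg q) _ _).trans (by gcongr)
    _ = _ := by
        push_cast
        rw [ENNReal.coe_toNNReal hDtop, hD]
        ring
end

section
/- Let n ≥ 1, 1 ≤ q, q₁, q₂ ≤ ∞ and s, s₁, s₂ ∈ ℝ. If the continuous weighted Young inequality L(q₁,s₁) ∗ L(q₂,s₂) ⊂ L(q,s) holds (there is a constant C with ‖f∗g‖_{L(q,s)} ≤ C‖f‖_{L(q₁,s₁)}‖g‖_{L(q₂,s₂)} for all nonnegative measurable f, g on ℝⁿ), then the discrete weighted Young inequality l(q₁,s₁) ∗ l(q₂,s₂) ⊂ l(q,s) holds (there is a constant C' with ‖a∗b‖_{l(q,s)} ≤ C'‖a‖_{l(q₁,s₁)}‖b‖_{l(q₂,s₂)} for all nonnegative sequences a, b on ℤⁿ). -/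
/-! The discrete inequality is obtained by testing the continuous one on step functions.  For
sequences `a`, `b` put `f = a ∘ ⌊·⌋` and `g = b ∘ ⌊·⌋`, with `⌊·⌋ : ℝⁿ → ℤⁿ` the coordinatewise
floor.  Three facts carry the argument.

* The weights `⟨x⟩ˢ` and `⟨⌊x⌋⟩ˢ` are comparable up to a constant depending only on `n` and `s`
  (`exists_weight_const`), so `‖f‖_{L(q,s)} ≤ K ‖a‖_{l(q,s)}` (`exists_Lns_floor_le`).
* If every coordinate of `x` has fractional part in `[1/2, 1)` and every coordinate of `y` has
  fractional part in `[0, 1/2)`, then `⌊x - y⌋ = ⌊x⌋ - ⌊y⌋`.  Restricting the convolution integral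
  to such `y` gives `(a ∗ b)(⌊x⌋) ≤ 2ⁿ (f ∗ g)(x)` for all such `x` (`dconv_le_cconv`).
* These `x` fill a fixed proportion `2⁻ⁿ` of each unit cell, so a pointwise bound on them
  controls the discrete norm of `a ∗ b` by the continuous norm of `f ∗ g` (`exists_lns_le`).
-/

open scoped ENNReal NNReal BigOperators
open MeasureTheory

/-- The coordinatewise floor `ℝⁿ → ℤⁿ`. -/
noncomputable def flr {n : ℕ} (x : Fin n → ℝ) : Fin n → ℤ := fun i => ⌊x i⌋

/-- The points all of whose coordinates have fractional part in `[c, d)`. -/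
def fractBox (n : ℕ) (c d : ℝ) : Set (Fin n → ℝ) :=
  {x | ∀ i, Int.fract (x i) ∈ Set.Ico c d}

lemma measurable_flr {n : ℕ} : Measurable (flr : (Fin n → ℝ) → (Fin n → ℤ)) :=
  measurable_pi_lambda _ fun i => Int.measurable_floor.comp (measurable_pi_apply i)

lemma measurable_flr_comp {n : ℕ} (F : (Fin n → ℤ) → ℝ≥0∞) : Measurable fun x => F (flr x) :=
  (Measurable.of_discrete (f := F)).comp measurable_flr

lemma flr_preimage_inter_fractBox {n : ℕ} {c d : ℝ} (hc : 0 ≤ c) (hd : d ≤ 1) (k : Fin n → ℤ) :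
    flr ⁻¹' {k} ∩ fractBox n c d = Set.pi Set.univ fun i => Set.Ico (k i + c) (k i + d) := by
  ext x
  simp only [Set.mem_inter_iff, Set.mem_preimage, Set.mem_singleton_iff, fractBox,
    Set.mem_ofPred_eq, Set.mem_pi, Set.mem_univ, true_implies, Set.mem_Ico]
  constructor
  · rintro ⟨rfl, h⟩ i
    have h1 := Int.floor_add_fract (x i)
    have h2 := h i
    simp only [flr]
    constructor <;> linarith
  · intro h
    have hk : ∀ i, ⌊x i⌋ = k i := fun i => by
      have := h i
      rw [Int.floor_eq_iff]
      constructor <;> linarith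
    refine ⟨funext hk, fun i => ?_⟩
    have h1 := Int.floor_add_fract (x i)
    rw [hk i] at h1
    have := h i
    constructor <;> linarith

lemma volume_flr_preimage_inter {n : ℕ} {c d : ℝ} (hc : 0 ≤ c) (hd : d ≤ 1) (k : Fin n → ℤ) :
    volume (flr ⁻¹' {k} ∩ fractBox n c d) = ENNReal.ofReal (d - c) ^ n := by
  rw [flr_preimage_inter_fractBox hc hd, Real.volume_pi_Ico]
  simp

lemma fractBox_zero_one (n : ℕ) : fractBox n 0 1 = Set.univ := by
  ext x
  simp [fractBox, Int.fract_nonneg, Int.fract_lt_one]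

lemma lintegral_flr {n : ℕ} {c d : ℝ} (hc : 0 ≤ c) (hd : d ≤ 1) (F : (Fin n → ℤ) → ℝ≥0∞) :
    ∫⁻ x in fractBox n c d, F (flr x) = ENNReal.ofReal (d - c) ^ n * ∑' k, F k := by
  rw [← lintegral_map (Measurable.of_discrete (f := F)) measurable_flr, lintegral_countable',
    ← ENNReal.tsum_mul_left]
  refine tsum_congr fun k => ?_
  rw [Measure.map_apply measurable_flr (measurableSet_singleton k),
    Measure.restrict_apply (measurable_flr (measurableSet_singleton k)),
    volume_flr_preimage_inter hc hd, mul_comm]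

lemma rpow_le_mul_rpow {u v c : ℝ} (s : ℝ) (hu : 1 ≤ u) (hv : 1 ≤ v) (hc : 1 ≤ c)
    (huv : u ≤ c * v) (hvu : v ≤ c * u) : u ^ s ≤ c ^ |s| * v ^ s := by
  rcases le_total 0 s with hs | hs
  · rw [abs_of_nonneg hs, ← Real.mul_rpow (by linarith) (by linarith)]
    exact Real.rpow_le_rpow (by linarith) huv hs
  · rw [abs_of_nonpos hs, Real.rpow_neg (by linarith), ← Real.inv_rpow (by linarith),
      ← Real.mul_rpow (by positivity) (by linarith)]
    refine Real.rpow_le_rpow_of_nonpos (by positivity) ?_ hs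
    rwa [inv_mul_le_iff₀ (by linarith)]

lemma sqrt_bracket_le {n : ℕ} (u v : Fin n → ℝ) (h : ∀ i, |u i - v i| ≤ 1) :
    √(1 + ∑ i, u i ^ 2) ≤ √(2 + 2 * n) * √(1 + ∑ i, v i ^ 2) := by
  rw [← Real.sqrt_mul (by positivity)]
  refine Real.sqrt_le_sqrt ?_
  have h1 : ∑ i, u i ^ 2 ≤ ∑ i, (2 * v i ^ 2 + 2) := by
    refine Finset.sum_le_sum fun i _ => ?_
    have := (sq_le_one_iff_abs_le_one _).2 (h i)
    nlinarith [sq_nonneg (u i - 2 * v i)]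
  rw [Finset.sum_add_distrib, ← Finset.mul_sum] at h1
  simp only [Finset.sum_const, Finset.card_univ, Fintype.card_fin, nsmul_eq_mul] at h1
  have h2 : 0 ≤ ∑ i, v i ^ 2 := Finset.sum_nonneg fun i _ => sq_nonneg _
  have h3 : 0 ≤ (n : ℝ) * ∑ i, v i ^ 2 := by positivity
  nlinarith

lemma exists_weight_const (n : ℕ) (s : ℝ) : ∃ K : ℝ≥0∞, K ≠ ∞ ∧ ∀ x : Fin n → ℝ,
    ENNReal.ofReal (rbr x ^ s) ≤ K * ENNReal.ofReal (zbr (flr x) ^ s) ∧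
    ENNReal.ofReal (zbr (flr x) ^ s) ≤ K * ENNReal.ofReal (rbr x ^ s) := by
  refine ⟨ENNReal.ofReal (√(2 + 2 * n) ^ |s|), ENNReal.ofReal_ne_top, fun x => ?_⟩
  have hb : ∀ u : Fin n → ℝ, 1 ≤ √(1 + ∑ i, u i ^ 2) := fun u => by
    rw [Real.one_le_sqrt]
    linarith [Finset.sum_nonneg fun i (_ : i ∈ Finset.univ) => sq_nonneg (u i)]
  have hc : 1 ≤ √(2 + 2 * (n : ℝ)) := by
    rw [Real.one_le_sqrt]
    linarith [Nat.cast_nonneg (α := ℝ) n]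
  have h1 : ∀ i, |x i - (flr x i : ℝ)| ≤ 1 := fun i => by
    rw [flr, Int.self_sub_floor, Int.abs_fract]
    exact (Int.fract_lt_one _).le
  have h2 : ∀ i, |(flr x i : ℝ) - x i| ≤ 1 := fun i => by rw [abs_sub_comm]; exact h1 i
  have e1 := sqrt_bracket_le x (fun i => (flr x i : ℝ)) h1
  have e2 := sqrt_bracket_le (fun i => (flr x i : ℝ)) x h2
  rw [← ENNReal.ofReal_mul (by positivity), ← ENNReal.ofReal_mul (by positivity)]
  exact ⟨ENNReal.ofReal_le_ofReal (rpow_le_mul_rpow s (hb _) (hb _) hc e1 e2),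
    ENNReal.ofReal_le_ofReal (rpow_le_mul_rpow s (hb _) (hb _) hc e2 e1)⟩

lemma exists_Lns_floor_le (n : ℕ) (q : ℝ≥0∞) (hq : 1 ≤ q) (s : ℝ) :
    ∃ K : ℝ≥0∞, K ≠ ∞ ∧ ∀ a : (Fin n → ℤ) → ℝ≥0∞,
      Lns n q s (fun x => a (flr x)) ≤ K * lns n q s a := by
  obtain ⟨K, hK, hw⟩ := exists_weight_const n s
  have hpt : ∀ (a : (Fin n → ℤ) → ℝ≥0∞) (x : Fin n → ℝ),
      a (flr x) * ENNReal.ofReal (rbr x ^ s) ≤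
        K * (a (flr x) * ENNReal.ofReal (zbr (flr x) ^ s)) := fun a x => by
    rw [mul_left_comm]
    exact mul_le_mul_right (hw x).1 _
  refine ⟨K, hK, fun a => ?_⟩
  by_cases hq' : q = ∞
  · simp only [Lns, lns, if_pos hq']
    refine essSup_le_of_ae_le _ (Filter.Eventually.of_forall fun x => (hpt a x).trans ?_)
    exact mul_le_mul_right
      (le_iSup (fun k => a k * ENNReal.ofReal (zbr k ^ s)) (flr x)) _
  · have hq0 : 0 < q.toReal := ENNReal.toReal_pos (by rintro rfl; simp at hq) hq'
    simp only [Lns, lns, if_neg hq']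
    have key : ∫⁻ x : Fin n → ℝ, (a (flr x) * ENNReal.ofReal (rbr x ^ s)) ^ q.toReal ≤
        K ^ q.toReal * ∑' k, (a k * ENNReal.ofReal (zbr k ^ s)) ^ q.toReal := by
      calc _ ≤ ∫⁻ x : Fin n → ℝ, K ^ q.toReal *
              (a (flr x) * ENNReal.ofReal (zbr (flr x) ^ s)) ^ q.toReal := by
            refine lintegral_mono fun x => ?_
            rw [← ENNReal.mul_rpow_of_nonneg _ _ hq0.le]
            exact ENNReal.rpow_le_rpow (hpt a x) hq0.le
        _ = _ := by
            rw [lintegral_const_mul' _ _ (ENNReal.rpow_ne_top_of_nonneg hq0.le hK)]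
            have := lintegral_flr (n := n) le_rfl le_rfl
              (fun k => (a k * ENNReal.ofReal (zbr k ^ s)) ^ q.toReal)
            rw [fractBox_zero_one, Measure.restrict_univ] at this
            simp [this]
    calc _ ≤ _ := ENNReal.rpow_le_rpow key (by positivity)
      _ = _ := by
        rw [ENNReal.mul_rpow_of_nonneg _ _ (by positivity), ← ENNReal.rpow_mul,
          mul_one_div_cancel hq0.ne', ENNReal.rpow_one]

/-- A pointwise bound on the upper half-cells, which carry the proportion `2⁻ⁿ` of every unit
cell, passes to the norms. -/
lemma exists_lns_le (n : ℕ) (q : ℝ≥0∞) (hq : 1 ≤ q) (s : ℝ) (M : ℝ≥0∞) (hM : M ≠ ∞) :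
    ∃ K : ℝ≥0∞, K ≠ ∞ ∧ ∀ (A : (Fin n → ℤ) → ℝ≥0∞) (F : (Fin n → ℝ) → ℝ≥0∞),
      (∀ x ∈ fractBox n (1 / 2) 1, A (flr x) ≤ M * F x) → lns n q s A ≤ K * Lns n q s F := by
  obtain ⟨K, hK, hw⟩ := exists_weight_const n s
  have hMK : M * K ≠ ∞ := ENNReal.mul_ne_top hM hK
  have hv0 : ENNReal.ofReal (1 - 1 / 2) ^ n ≠ 0 :=
    pow_ne_zero _ (by rw [Ne, ENNReal.ofReal_eq_zero]; norm_num)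
  have hvt : ENNReal.ofReal (1 - 1 / 2) ^ n ≠ ∞ := ENNReal.pow_ne_top ENNReal.ofReal_ne_top
  have hpt : ∀ (A : (Fin n → ℤ) → ℝ≥0∞) (F : (Fin n → ℝ) → ℝ≥0∞),
      (∀ x ∈ fractBox n (1 / 2) 1, A (flr x) ≤ M * F x) → ∀ x ∈ fractBox n (1 / 2) 1,
      A (flr x) * ENNReal.ofReal (zbr (flr x) ^ s) ≤
        M * K * (F x * ENNReal.ofReal (rbr x ^ s)) := fun A F h x hx => by
    rw [mul_mul_mul_comm]
    exact mul_le_mul' (h x hx) (hw x).2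
  by_cases hq' : q = ∞
  · refine ⟨M * K, hMK, fun A F h => ?_⟩
    simp only [Lns, lns, if_pos hq']
    refine iSup_le fun k => ?_
    -- The half-cell above `k` has positive measure, so it meets the full-measure set on which
    -- the weighted function is at most its essential supremum.
    obtain ⟨x, hx, hle⟩ : ∃ x ∈ flr ⁻¹' {k} ∩ fractBox n (1 / 2) 1,
        F x * ENNReal.ofReal (rbr x ^ s) ≤
          essSup (fun x => F x * ENNReal.ofReal (rbr x ^ s)) volume := by
      by_contra! hcon
      refine hv0 ?_
      rw [← volume_flr_preimage_inter (by norm_num) le_rfl k]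
      exact measure_mono_null (fun x hx => not_le.2 (hcon x hx))
        (ENNReal.ae_le_essSup (μ := volume) fun x : Fin n → ℝ => F x * ENNReal.ofReal (rbr x ^ s))
    have := hpt A F h x hx.2
    rw [show flr x = k from hx.1] at this
    exact this.trans (mul_le_mul_right hle _)
  · have hq0 : 0 < q.toReal := ENNReal.toReal_pos (by rintro rfl; simp at hq) hq'
    refine ⟨((ENNReal.ofReal (1 - 1 / 2) ^ n)⁻¹ * (M * K) ^ q.toReal) ^ (1 / q.toReal),
      ENNReal.rpow_ne_top_of_nonneg (by positivity) (ENNReal.mul_ne_top (ENNReal.inv_ne_top.2 hv0)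
        (ENNReal.rpow_ne_top_of_nonneg hq0.le hMK)), fun A F h => ?_⟩
    simp only [Lns, lns, if_neg hq']
    rw [← ENNReal.mul_rpow_of_nonneg _ _ (by positivity)]
    refine ENNReal.rpow_le_rpow ?_ (by positivity)
    rw [mul_assoc, ← ENNReal.mul_le_iff_le_inv hv0 hvt,
      ← lintegral_flr (by norm_num) le_rfl,
      ← lintegral_const_mul' _ _ (ENNReal.rpow_ne_top_of_nonneg hq0.le hMK)]
    refine le_trans (setLIntegral_mono' ?_ fun x hx => ?_) (setLIntegral_le_lintegral _ _)
    · have : fractBox n (1 / 2) 1 =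
          ⋂ i, (fun x : Fin n → ℝ => Int.fract (x i)) ⁻¹' Set.Ico (1 / 2) 1 := by
        ext x; simp [fractBox]
      rw [this]
      exact MeasurableSet.iInter fun i =>
        (measurable_fract.comp (measurable_pi_apply i)) measurableSet_Ico
    · rw [← ENNReal.mul_rpow_of_nonneg _ _ hq0.le]
      exact ENNReal.rpow_le_rpow (hpt A F h x hx) hq0.le

lemma flr_sub {n : ℕ} {x y : Fin n → ℝ} (hx : x ∈ fractBox n (1 / 2) 1)
    (hy : y ∈ fractBox n 0 (1 / 2)) : flr (x - y) = flr x - flr y := by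
  funext i
  simp only [flr, Pi.sub_apply]
  rw [Int.floor_eq_iff]
  push_cast
  have h1 := Int.floor_add_fract (x i)
  have h2 := Int.floor_add_fract (y i)
  obtain ⟨h3, h4⟩ := hx i
  obtain ⟨h5, h6⟩ := hy i
  constructor <;> linarith

lemma dconv_le_cconv {n : ℕ} (a b : (Fin n → ℤ) → ℝ≥0∞) {x : Fin n → ℝ}
    (hx : x ∈ fractBox n (1 / 2) 1) :
    dconv a b (flr x) ≤ (ENNReal.ofReal (1 / 2 - 0) ^ n)⁻¹ *
      cconv (fun x => a (flr x)) (fun x => b (flr x)) x := by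
  have hv0 : ENNReal.ofReal (1 / 2 - 0) ^ n ≠ 0 :=
    pow_ne_zero _ (by rw [Ne, ENNReal.ofReal_eq_zero]; norm_num)
  rw [← ENNReal.mul_le_iff_le_inv hv0 (ENNReal.pow_ne_top ENNReal.ofReal_ne_top)]
  simp only [dconv, cconv]
  rw [← lintegral_flr le_rfl (by norm_num) fun j => a (flr x - j) * b j]
  refine le_trans (setLIntegral_mono ?_ fun y hy => ?_) (setLIntegral_le_lintegral _ _)
  · exact ((measurable_flr_comp a).comp (measurable_const.sub measurable_id)).mul
      (measurable_flr_comp b)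
  · rw [flr_sub hx hy]

/-- the continuous bracket-weighted Young inequality implies the
discrete weighted Young inequality. -/
theorem bracket_weighted_young_implies_discrete
    (n : ℕ) (hn : 1 ≤ n) (q q₁ q₂ : ℝ≥0∞) (hq : 1 ≤ q) (hq₁ : 1 ≤ q₁) (hq₂ : 1 ≤ q₂)
    (s s₁ s₂ : ℝ)
    (h : ∃ C : ℝ≥0, ∀ f g : (Fin n → ℝ) → ℝ≥0∞, Measurable f → Measurable g →
        Lns n q s (cconv f g) ≤ C * Lns n q₁ s₁ f * Lns n q₂ s₂ g) :
    ∃ C' : ℝ≥0, ∀ a b : (Fin n → ℤ) → ℝ≥0∞,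
      lns n q s (dconv a b) ≤ C' * lns n q₁ s₁ a * lns n q₂ s₂ b := by
  obtain ⟨C, hC⟩ := h
  have hv0 : ENNReal.ofReal (1 / 2 - 0) ^ n ≠ 0 :=
    pow_ne_zero _ (by rw [Ne, ENNReal.ofReal_eq_zero]; norm_num)
  obtain ⟨K, hK, hlow⟩ := exists_lns_le n q hq s _ (ENNReal.inv_ne_top.2 hv0)
  obtain ⟨K₁, hK₁, hup₁⟩ := exists_Lns_floor_le n q₁ hq₁ s₁
  obtain ⟨K₂, hK₂, hup₂⟩ := exists_Lns_floor_le n q₂ hq₂ s₂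
  have hfin : K * (C * K₁ * K₂) ≠ ∞ := by finiteness
  refine ⟨(K * (C * K₁ * K₂)).toNNReal, fun a b => ?_⟩
  rw [ENNReal.coe_toNNReal hfin]
  calc lns n q s (dconv a b)
      ≤ K * Lns n q s (cconv (fun x => a (flr x)) (fun x => b (flr x))) :=
        hlow _ _ fun x hx => dconv_le_cconv a b hx
    _ ≤ K * (C * (K₁ * lns n q₁ s₁ a) * (K₂ * lns n q₂ s₂ b)) := by
        refine mul_le_mul_right ((hC _ _ (measurable_flr_comp a) (measurable_flr_comp b)).trans ?_) _
        exact mul_le_mul' (mul_le_mul_right (hup₁ a) _) (hup₂ b)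
    _ = K * (C * K₁ * K₂) * lns n q₁ s₁ a * lns n q₂ s₂ b := by ring
end

section
/- Let n ≥ 1, 1 ≤ q, q₁, q₂ ≤ ∞ and s, s₁, s₂ ∈ ℝ. If the continuous weighted Young inequality L(q₁,s₁) ∗ L(q₂,s₂) ⊂ L(q,s) holds (there is a constant C with ‖f∗g‖_{L(q,s)} ≤ C‖f‖_{L(q₁,s₁)}‖g‖_{L(q₂,s₂)} for all nonnegative measurable f, g on ℝⁿ), then 1 + 1/q ≥ 1/q₁ + 1/q₂. -/
/-! Both functions are taken to be the indicator of a small cube around the origin, i.e. of a sup-norm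
ball of radius `r ≤ 1`.  On the unit cube every weight `⟨x⟩^s` is comparable to `1`, so the
weighted norms see only the local, unweighted `L^q` behaviour: `Lns_indicator_le` bounds the norms
of the indicators by a constant times `(r^n)^(1/q_i)`, while `le_cconv_indicator` and
`le_Lns_of_le` bound the norm of their convolution below by a constant times `r^n (r^n)^(1/q)`.
Letting `r → 0` compares the exponents. -/

open scoped ENNReal NNReal BigOperators
open MeasureTheory

/-- An upper bound for both `⟨x⟩^s` and `⟨x⟩^(-s)` on the unit cube of `ℝⁿ`. -/
noncomputable def wbd (n : ℕ) (s : ℝ) : ℝ := Real.sqrt (1 + n) ^ |s|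

lemma wbd_pos (n : ℕ) (s : ℝ) : 0 < wbd n s := by
  unfold wbd; positivity

lemma one_le_rbr {n : ℕ} (x : Fin n → ℝ) : 1 ≤ rbr x := by
  unfold rbr
  rw [Real.one_le_sqrt]
  have : 0 ≤ ∑ i, (x i) ^ 2 := Finset.sum_nonneg fun i _ => sq_nonneg _
  linarith

lemma rbr_le {n : ℕ} {x : Fin n → ℝ} (hx : x ∈ Metric.ball (0 : Fin n → ℝ) 1) :
    rbr x ≤ Real.sqrt (1 + n) := by
  unfold rbr
  apply Real.sqrt_le_sqrt
  have : ∑ i, (x i) ^ 2 ≤ ∑ _i : Fin n, (1 : ℝ) := by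
    refine Finset.sum_le_sum fun i _ => ?_
    rw [mem_ball_zero_iff] at hx
    have h1 := (norm_le_pi_norm x i).trans hx.le
    rwa [Real.norm_eq_abs, ← sq_le_one_iff_abs_le_one] at h1
  simpa using this

lemma rbr_rpow_le {n : ℕ} (s : ℝ) {x : Fin n → ℝ} (hx : x ∈ Metric.ball (0 : Fin n → ℝ) 1) :
    rbr x ^ s ≤ wbd n s :=
  (Real.rpow_le_rpow_of_exponent_le (one_le_rbr x) (le_abs_self s)).trans
    (Real.rpow_le_rpow (zero_le_one.trans (one_le_rbr x)) (rbr_le hx) (abs_nonneg s))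

lemma le_rbr_rpow {n : ℕ} (s : ℝ) {x : Fin n → ℝ} (hx : x ∈ Metric.ball (0 : Fin n → ℝ) 1) :
    (wbd n s)⁻¹ ≤ rbr x ^ s := by
  have h0 : 0 < rbr x := zero_lt_one.trans_le (one_le_rbr x)
  have h1 := rbr_rpow_le (-s) hx
  rw [Real.rpow_neg h0.le] at h1
  have h2 : wbd n (-s) = wbd n s := by simp [wbd]
  rw [h2] at h1
  exact inv_le_of_inv_le₀ (Real.rpow_pos_of_pos h0 s) h1

lemma Lns_eq_eLpNorm (n : ℕ) {q : ℝ≥0∞} (hq : 1 ≤ q) (s : ℝ) (f : (Fin n → ℝ) → ℝ≥0∞) :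
    Lns n q s f = eLpNorm (fun x => f x * ENNReal.ofReal (rbr x ^ s)) q volume := by
  unfold Lns
  split_ifs with h
  · subst h
    simp [eLpNorm_exponent_top, eLpNormEssSup]
  · rw [eLpNorm_eq_lintegral_rpow_enorm_toReal (zero_lt_one.trans_le hq).ne' h]
    simp

lemma eLpNorm_indicator_eq {n : ℕ} {q : ℝ≥0∞} (hq : 1 ≤ q) {A : Set (Fin n → ℝ)}
    (hA : MeasurableSet A) (hA0 : volume A ≠ 0) (c : ℝ≥0∞) :
    eLpNorm (A.indicator fun _ => c) q volume = c * volume A ^ iv q := by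
  have h0 : q ≠ 0 := (zero_lt_one.trans_le hq).ne'
  rw [eLpNorm_indicator_const' hA hA0 h0]
  simp [iv, ENNReal.toReal_inv]

lemma Lns_indicator_le {n : ℕ} {q : ℝ≥0∞} (hq : 1 ≤ q) (s : ℝ) {A : Set (Fin n → ℝ)}
    (hA : MeasurableSet A) (hA0 : volume A ≠ 0) (hA1 : A ⊆ Metric.ball 0 1) :
    Lns n q s (A.indicator 1) ≤ ENNReal.ofReal (wbd n s) * volume A ^ iv q := by
  rw [Lns_eq_eLpNorm n hq, ← eLpNorm_indicator_eq hq hA hA0]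
  refine eLpNorm_mono_enorm fun x => ?_
  by_cases hx : x ∈ A
  · simpa [hx] using ENNReal.ofReal_le_ofReal (rbr_rpow_le s (hA1 hx))
  · simp [hx]

lemma le_Lns_of_le {n : ℕ} {q : ℝ≥0∞} (hq : 1 ≤ q) (s : ℝ) {A : Set (Fin n → ℝ)}
    (hA : MeasurableSet A) (hA0 : volume A ≠ 0) (hA1 : A ⊆ Metric.ball 0 1)
    {f : (Fin n → ℝ) → ℝ≥0∞} {c : ℝ≥0∞} (hf : ∀ x ∈ A, c ≤ f x) :
    c * ENNReal.ofReal (wbd n s)⁻¹ * volume A ^ iv q ≤ Lns n q s f := by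
  rw [Lns_eq_eLpNorm n hq, ← eLpNorm_indicator_eq hq hA hA0]
  refine eLpNorm_mono_enorm fun x => ?_
  by_cases hx : x ∈ A
  · simpa [hx] using
      mul_le_mul' (hf x hx) (ENNReal.ofReal_le_ofReal (le_rbr_rpow s (hA1 hx)))
  · simp [hx]

/-- For `x` in the half-size cube, the integrand of the convolution is `1` on the half-size cube. -/
lemma le_cconv_indicator {n : ℕ} {r : ℝ} {x : Fin n → ℝ}
    (hx : x ∈ Metric.ball (0 : Fin n → ℝ) (r / 2)) :
    volume (Metric.ball (0 : Fin n → ℝ) (r / 2)) ≤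
      cconv ((Metric.ball 0 r).indicator 1) ((Metric.ball 0 r).indicator 1) x := by
  unfold cconv
  rw [← lintegral_indicator_one Metric.isOpen_ball.measurableSet]
  refine lintegral_mono fun y => ?_
  by_cases hy : y ∈ Metric.ball (0 : Fin n → ℝ) (r / 2)
  · have hxy : x - y ∈ Metric.ball (0 : Fin n → ℝ) r := by
      rw [mem_ball_zero_iff] at *
      linarith [norm_sub_le x y]
    have hy' : y ∈ Metric.ball (0 : Fin n → ℝ) r := by
      rw [mem_ball_zero_iff] at *
      linarith [norm_nonneg y]
    simp only [Set.indicator_of_mem hy, Set.indicator_of_mem hxy, Set.indicator_of_mem hy',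
      Pi.one_apply, mul_one, le_refl]
  · simp only [Set.indicator_of_notMem hy, zero_le]

/-- necessary exponent condition for the continuous
bracket-weighted Young inequality. -/
theorem bracket_weighted_young_necessary_exponent
    (n : ℕ) (hn : 1 ≤ n) (q q₁ q₂ : ℝ≥0∞) (hq : 1 ≤ q) (hq₁ : 1 ≤ q₁) (hq₂ : 1 ≤ q₂)
    (s s₁ s₂ : ℝ)
    (h : ∃ C : ℝ≥0, ∀ f g : (Fin n → ℝ) → ℝ≥0∞, Measurable f → Measurable g →
        Lns n q s (cconv f g) ≤ C * Lns n q₁ s₁ f * Lns n q₂ s₂ g) :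
    iv q₁ + iv q₂ ≤ 1 + iv q := by
  obtain ⟨C, hC⟩ := h
  by_contra! hlt
  set a := iv q
  set b := iv q₁
  set c := iv q₂
  set δ := b + c - (1 + a) with hδ
  have hδ0 : 0 < δ := by linarith
  set K : ℝ := wbd n s * (C * wbd n s₁ * wbd n s₂ * ((2 : ℝ) ^ n) ^ (b + c)) with hK
  have hw := wbd_pos n s
  have hw₁ := wbd_pos n s₁
  have hw₂ := wbd_pos n s₂
  have hK0 : 0 ≤ K := by positivity
  -- `v` is the volume `r ^ n` of the half-size cube, chosen so that `v ^ (-δ)` exceeds `K`.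
  set v : ℝ := (K + 1) ^ (-δ⁻¹) with hv
  have hv0 : 0 < v := by positivity
  have hv1 : v ≤ 1 := Real.rpow_le_one_of_one_le_of_nonpos (by linarith)
    (by simpa using hδ0.le)
  have hvδ : v ^ (-δ) = K + 1 := by
    rw [hv, ← Real.rpow_mul (by linarith)]
    simp [hδ0.ne']
  obtain ⟨r, hr0, hr1, hrv⟩ : ∃ r : ℝ, 0 < r ∧ r ≤ 1 ∧ r ^ n = v := by
    refine ⟨v ^ ((n : ℝ)⁻¹), by positivity, Real.rpow_le_one hv0.le hv1 (by positivity), ?_⟩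
    exact Real.rpow_inv_natCast_pow hv0.le (by omega)
  have hvol : volume (Metric.ball (0 : Fin n → ℝ) r) = ENNReal.ofReal (2 ^ n * v) := by
    rw [Real.volume_pi_ball _ hr0, Fintype.card_fin, mul_pow, hrv]
  have hvol' : volume (Metric.ball (0 : Fin n → ℝ) (r / 2)) = ENNReal.ofReal v := by
    rw [Real.volume_pi_ball _ (half_pos hr0), Fintype.card_fin, ← hrv]
    congr 2
    ring
  have hne : volume (Metric.ball (0 : Fin n → ℝ) r) ≠ 0 :=
    (Metric.measure_ball_pos _ _ hr0).ne'
  have hne' : volume (Metric.ball (0 : Fin n → ℝ) (r / 2)) ≠ 0 :=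
    (Metric.measure_ball_pos _ _ (half_pos hr0)).ne'
  have hm : MeasurableSet (Metric.ball (0 : Fin n → ℝ) r) := Metric.isOpen_ball.measurableSet
  have hm' : MeasurableSet (Metric.ball (0 : Fin n → ℝ) (r / 2)) :=
    Metric.isOpen_ball.measurableSet
  have hsub : Metric.ball (0 : Fin n → ℝ) r ⊆ Metric.ball 0 1 := Metric.ball_subset_ball hr1
  have hsub' : Metric.ball (0 : Fin n → ℝ) (r / 2) ⊆ Metric.ball 0 1 :=
    Metric.ball_subset_ball (by linarith)
  have key := ((le_Lns_of_le hq s hm' hne' hsub' fun x hx => le_cconv_indicator hx).trans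
    (hC _ _ (measurable_one.indicator hm) (measurable_one.indicator hm))).trans
    (mul_le_mul' (mul_le_mul_right (Lns_indicator_le hq₁ s₁ hm hne hsub) _)
      (Lns_indicator_le hq₂ s₂ hm hne hsub))
  have h2v : (0 : ℝ) < 2 ^ n * v := by positivity
  rw [hvol, hvol', ENNReal.ofReal_rpow_of_pos hv0, ENNReal.ofReal_rpow_of_pos h2v,
    ENNReal.ofReal_rpow_of_pos h2v, ← ENNReal.ofReal_coe_nnreal (p := C),
    ← ENNReal.ofReal_mul (by positivity), ← ENNReal.ofReal_mul (by positivity),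
    ← ENNReal.ofReal_mul (by positivity), ← ENNReal.ofReal_mul (by positivity),
    ← ENNReal.ofReal_mul (by positivity), ← ENNReal.ofReal_mul (by positivity),
    ENNReal.ofReal_le_ofReal_iff (by positivity)] at key
  have e1 : v ^ (1 + a) = wbd n s * (v * (wbd n s)⁻¹ * v ^ a) := by
    rw [Real.rpow_add hv0, Real.rpow_one]
    field_simp
  have e2 : wbd n s * (C * (wbd n s₁ * (2 ^ n * v) ^ b) * (wbd n s₂ * (2 ^ n * v) ^ c))
      = K * v ^ (b + c) := by
    rw [hK, Real.mul_rpow (by positivity) hv0.le, Real.mul_rpow (by positivity) hv0.le,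
      Real.rpow_add hv0, Real.rpow_add (by positivity)]
    ring
  have h3 : v ^ (1 + a) ≤ K * v ^ (b + c) := by
    rw [e1, ← e2]
    exact mul_le_mul_of_nonneg_left key hw.le
  have h4 : v ^ (1 + a) = (K + 1) * v ^ (b + c) := by
    rw [← hvδ, ← Real.rpow_add hv0]
    congr 1
    rw [hδ]; ring
  have h5 : 0 < v ^ (b + c) := by positivity
  linarith
end
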